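/- Let G : P_1(ℝ)×ℝ → ℝ be of class C^{0,1}. Then the function Φ : P_1(ℝ)×P_1(ℝ) → ℝ defined by Φ(m,μ) := ∫_0^1 ∫_ℝ G((1−t)μ + t·m, x) d(m − μ)(x) dt is jointly continuous with respect to W_1. -/

import Mathlib

open MeasureTheory Filter Topology

noncomputable section

/-- `π` is a coupling of the measures `m` and `μ` on `ℝ`. -/
def IsCoupling (π : Measure (ℝ × ℝ)) (m μ : Measure ℝ) : Prop :=
  π.map Prod.fst = m ∧ π.map Prod.snd = μ

/-- The Wasserstein distance of order one between two measures on `ℝ`: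
the infimum over couplings `π` of `∫ |x - y| dπ(x,y)`. -/
def W1 (m μ : Measure ℝ) : ℝ :=
  sInf {c : ℝ | ∃ π : Measure (ℝ × ℝ), IsCoupling π m μ ∧ c = ∫ p, |p.1 - p.2| ∂π}

/-- Membership in `P₁(ℝ)`: Borel probability measures on `ℝ` with finite first moment. -/
def MemP1 (m : Measure ℝ) : Prop :=
  IsProbabilityMeasure m ∧ Integrable (fun x => |x|) m

/-- Membership in `P([-K,K])`: probability measures supported in `[-K,K]`. -/
def MemPK (K : ℝ) (m : Measure ℝ) : Prop :=
  IsProbabilityMeasure m ∧ m (Set.Icc (-K) K)ᶜ = 0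

/-- The convex combination `(1-t)·m₀ + t·m` of two measures. -/
def lineSeg (m₀ m : Measure ℝ) (t : ℝ) : Measure ℝ :=
  ENNReal.ofReal (1 - t) • m₀ + ENNReal.ofReal t • m

/-- The integral of `f` against the signed difference `m - μ`:
`∫ f d(m - μ) = ∫ f dm - ∫ f dμ`. -/
def dInt (f : ℝ → ℝ) (m μ : Measure ℝ) : ℝ := (∫ x, f x ∂m) - ∫ x, f x ∂μ

/-- `W₁`-(sequential) compactness of a subset of `P₁(ℝ)`. -/
def W1Compact (𝒦 : Set (Measure ℝ)) : Prop :=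
  (∀ m ∈ 𝒦, MemP1 m) ∧
  ∀ u : ℕ → Measure ℝ, (∀ n, u n ∈ 𝒦) →
    ∃ m ∈ 𝒦, ∃ φ : ℕ → ℕ, StrictMono φ ∧
      Tendsto (fun n => W1 (u (φ n)) m) atTop (𝓝 0)

/-- Sublinearity in the real variable, uniformly over `W₁`-compact sets of measures. -/
def SublinearOnCompacts (G : Measure ℝ → ℝ → ℝ) : Prop :=
  ∀ 𝒦 : Set (Measure ℝ), W1Compact 𝒦 →
    ∃ C > 0, ∀ m ∈ 𝒦, ∀ x : ℝ, |G m x| ≤ C * (1 + |x|)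

/-- `W₁`-continuity of a function of the measure variable at a point of `P₁(ℝ)`. -/
def W1ContinuousAt (g : Measure ℝ → ℝ) (m : Measure ℝ) : Prop :=
  ∀ ε > 0, ∃ η > 0, ∀ μ, MemP1 μ → W1 μ m < η → |g μ - g m| < ε

/-- Joint continuity of `G : P₁(ℝ) × ℝ → ℝ`. -/
def JointlyContinuous (G : Measure ℝ → ℝ → ℝ) : Prop :=
  ∀ m x, MemP1 m → ∀ ε > 0, ∃ η > 0, ∀ μ y, MemP1 μ →
    W1 μ m < η → |y - x| < η → |G μ y - G m x| < ε

/-- Joint continuity of `G : P₁(ℝ) × ℝ × ℝ → ℝ`. -/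
def JointlyContinuous2 (G : Measure ℝ → ℝ → ℝ → ℝ) : Prop :=
  ∀ m x y, MemP1 m → ∀ ε > 0, ∃ η > 0, ∀ μ x' y', MemP1 μ →
    W1 μ m < η → |x' - x| < η → |y' - y| < η → |G μ x' y' - G m x y| < ε

/-- `H` is a version of the (linear functional) derivative of `F : P₁(ℝ) → ℝ`. -/
def IsDerivVersion (F : Measure ℝ → ℝ) (H : Measure ℝ → ℝ → ℝ) : Prop :=
  Measurable (Function.uncurry H) ∧
  SublinearOnCompacts H ∧
  ∀ m m₀, MemP1 m → MemP1 m₀ →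
    F m - F m₀ = ∫ t in (0:ℝ)..1, dInt (H (lineSeg m₀ m t)) m m₀

/-- `H` is the canonical derivative of `F : P₁(ℝ) → ℝ`: the version of the derivative
satisfying `∫ H(μ,x) dμ(x) = 0` for every `μ ∈ P₁(ℝ)`. -/
def IsCanonicalDeriv (F : Measure ℝ → ℝ) (H : Measure ℝ → ℝ → ℝ) : Prop :=
  IsDerivVersion F H ∧ ∀ μ, MemP1 μ → ∫ x, H μ x ∂μ = 0

/-- `G : P₁(ℝ) × ℝ → ℝ` is of class `C^{0,1}`. -/
def IsC01 (G : Measure ℝ → ℝ → ℝ) : Prop :=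
  (∀ m, MemP1 m → ContDiff ℝ 1 (G m)) ∧
  (∀ x : ℝ, ∀ m, MemP1 m → W1ContinuousAt (fun μ => G μ x) m) ∧
  SublinearOnCompacts G ∧
  JointlyContinuous (fun m x => deriv (G m) x)

/-- `F : P₁(ℝ) → ℝ` is of class `C¹` with canonical derivative `H`. -/
def IsC1 (F : Measure ℝ → ℝ) (H : Measure ℝ → ℝ → ℝ) : Prop :=
  IsCanonicalDeriv F H ∧ IsC01 H

/-- Joint continuity on `P([-K,K]) × [-K,K]`. -/
def JointlyContinuousOnK (K : ℝ) (G : Measure ℝ → ℝ → ℝ) : Prop :=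
  ∀ m x, MemPK K m → x ∈ Set.Icc (-K) K → ∀ ε > 0, ∃ η > 0,
    ∀ μ y, MemPK K μ → y ∈ Set.Icc (-K) K → W1 μ m < η → |y - x| < η →
      |G μ y - G m x| < ε

/-- Joint continuity on `P([-K,K]) × [-K,K]²`. -/
def JointlyContinuousOnK2 (K : ℝ) (G : Measure ℝ → ℝ → ℝ → ℝ) : Prop :=
  ∀ m x y, MemPK K m → x ∈ Set.Icc (-K) K → y ∈ Set.Icc (-K) K → ∀ ε > 0, ∃ η > 0,
    ∀ μ x' y', MemPK K μ → x' ∈ Set.Icc (-K) K → y' ∈ Set.Icc (-K) K →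
      W1 μ m < η → |x' - x| < η → |y' - y| < η → |G μ x' y' - G m x y| < ε

end

/-!
Fix a coupling `π` of `m` and `μ`. If `|g x - f y| ≤ L * |x - y| + h y` for all `x` and `y`, then
integrating against `π` bounds `|∫ g dm - ∫ f dμ|` by `L * ∫ |x - y| dπ + ∫ h dμ`, and hence by
`L * W1 m μ + ∫ h dμ`. Such a pointwise estimate holds, with `∫ h dμ` as small as desired, as soon
as `g` is close to `f` locally uniformly and both grow at most linearly: near the diagonal over a
large ball `h` is a small constant, far from the diagonal the growth is absorbed by `L * |x - y|`,
and for `y` outside the ball `h` is the growth bound, whose integral is small because `μ` has a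
finite first moment. Consequently `(ν, ρ) ↦ ∫ G(ν, x) dρ(x)` is jointly continuous. Since
`(m, μ, t) ↦ (1 - t) μ + t m` is continuous too, the integrand defining `Φ` is jointly continuous
in `(m, μ, t)`, and `[0, 1]` is compact. A class-`C^{0,1}` `G` is itself jointly
continuous, being locally Lipschitz in `x` uniformly for nearby measures.
-/

section ContinuousConvergence

variable {α X E F : Type*} {l : Filter α}

lemma tendstoUniformlyOn_of_forall_tendsto_prod [TopologicalSpace X] [UniformSpace F]
    {K : Set X} (hK : IsCompact K) {u : α → X → F} {f : X → F} (hf : ContinuousOn f K)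
    (h : ∀ x ∈ K, Tendsto (fun p : α × X => u p.1 p.2) (l ×ˢ 𝓝[K] x) (𝓝 (f x))) :
    TendstoUniformlyOn u f l K := by
  rw [← tendstoLocallyUniformlyOn_iff_tendstoUniformlyOn_of_compact hK,
    tendstoLocallyUniformlyOn_iff_forall_tendsto]
  exact fun x hx =>
    (((hf x hx).tendsto.comp tendsto_snd).prodMk_nhds (h x hx)).mono_right (nhds_le_uniformity _)

variable [NormedAddCommGroup E] [NormedAddCommGroup F] {u : α → E → F} {f : E → F}

lemma exists_eventually_norm_sub_lt_near_diagonal {K : Set E} (hK : IsCompact K)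
    (hf : Continuous f)
    (h : ∀ x, Tendsto (fun p : α × E => u p.1 p.2) (l ×ˢ 𝓝 x) (𝓝 (f x))) {δ : ℝ} (hδ : 0 < δ) :
    ∃ η > 0, ∀ᶠ a in l, ∀ y ∈ K, ∀ x, ‖x - y‖ < η → ‖u a x - f y‖ < δ := by
  have hunif : TendstoUniformlyOn (fun (p : α × E) y => u p.1 (y + p.2)) f (l ×ˢ 𝓝 0) K := by
    refine tendstoUniformlyOn_of_forall_tendsto_prod hK hf.continuousOn fun y _ => ?_
    have hshift : Tendsto (fun q : (α × E) × E => q.2 + q.1.2) ((l ×ˢ 𝓝 0) ×ˢ 𝓝[K] y) (𝓝 y) := by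
      have hy : Tendsto (fun q : (α × E) × E => q.2) ((l ×ˢ 𝓝 0) ×ˢ 𝓝[K] y) (𝓝 y) :=
        tendsto_snd.mono_right nhdsWithin_le_nhds
      simpa only [add_zero, Function.comp_apply] using hy.add (tendsto_snd.comp tendsto_fst)
    exact (h y).comp ((tendsto_fst.comp tendsto_fst).prodMk hshift)
  obtain ⟨p, hp, q, hq, hpq⟩ := eventually_prod_iff.1 (Metric.tendstoUniformlyOn_iff.1 hunif δ hδ)
  obtain ⟨η, hη, hball⟩ := Metric.eventually_nhds_iff.1 hq
  refine ⟨η, hη, hp.mono fun a ha y hy x hxy => ?_⟩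
  have hdist := hpq ha (hball (y := x - y) (by rwa [dist_zero_right])) y hy
  rwa [add_sub_cancel, dist_comm, dist_eq_norm] at hdist

lemma exists_eventually_norm_sub_le_add_indicator [ProperSpace E] {C : ℝ} (hf : Continuous f)
    (h : ∀ x, Tendsto (fun p : α × E => u p.1 p.2) (l ×ˢ 𝓝 x) (𝓝 (f x)))
    (hu_le : ∀ᶠ a in l, ∀ x, ‖u a x‖ ≤ C * (1 + ‖x‖)) (hf_le : ∀ x, ‖f x‖ ≤ C * (1 + ‖x‖))
    (R : ℝ) {δ : ℝ} (hδ : 0 < δ) :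
    ∃ L, ∀ᶠ a in l, ∀ x y, ‖u a x - f y‖ ≤
      L * ‖x - y‖ + (δ + {y : E | R < ‖y‖}.indicator (fun y => 2 * C * (1 + ‖y‖)) y) := by
  have hC : 0 ≤ C := by simpa using (norm_nonneg (f 0)).trans (hf_le 0)
  obtain ⟨η, hη, hnear⟩ :=
    exists_eventually_norm_sub_lt_near_diagonal (isCompact_closedBall (0 : E) R) hf h hδ
  refine ⟨C * (1 + 2 * (1 + |R|) / η), ?_⟩
  filter_upwards [hnear, hu_le] with a hnear hu_le x y
  have hgrowth : ‖u a x - f y‖ ≤ C * ‖x - y‖ + 2 * C * (1 + ‖y‖) :=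
    calc ‖u a x - f y‖ ≤ C * (1 + ‖x‖) + C * (1 + ‖y‖) :=
          (norm_sub_le _ _).trans (add_le_add (hu_le x) (hf_le y))
      _ ≤ C * (1 + (‖x - y‖ + ‖y‖)) + C * (1 + ‖y‖) := by
          gcongr
          exact norm_le_norm_sub_add x y
      _ = C * ‖x - y‖ + 2 * C * (1 + ‖y‖) := by ring
  have hsplit : C * (1 + 2 * (1 + |R|) / η) * ‖x - y‖ =
      C * ‖x - y‖ + 2 * C * (1 + |R|) * (‖x - y‖ / η) := by ring
  have hfar_nonneg : 0 ≤ 2 * C * (1 + |R|) * (‖x - y‖ / η) := by positivity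
  have hdiag_nonneg : 0 ≤ C * ‖x - y‖ := by positivity
  rcases lt_or_ge R ‖y‖ with hy | hy
  · rw [Set.indicator_of_mem (show y ∈ {y : E | R < ‖y‖} from hy)]
    linarith
  rw [Set.indicator_of_notMem (show y ∉ {y : E | R < ‖y‖} from hy.not_gt)]
  rcases lt_or_ge ‖x - y‖ η with hxy | hxy
  · linarith [hnear y (mem_closedBall_zero_iff.2 hy) x hxy]
  · have hy_far : 2 * C * (1 + ‖y‖) ≤ 2 * C * (1 + |R|) * (‖x - y‖ / η) :=
      calc 2 * C * (1 + ‖y‖) ≤ 2 * C * (1 + |R|) := by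
            gcongr
            exact hy.trans (le_abs_self R)
        _ ≤ 2 * C * (1 + |R|) * (‖x - y‖ / η) :=
            le_mul_of_one_le_right (by positivity) ((one_le_div hη).2 hxy)
    linarith

end ContinuousConvergence

lemma tendsto_integral_indicator_lt_norm {E F : Type*} [NormedAddCommGroup E] [MeasurableSpace E]
    [OpensMeasurableSpace E] [NormedAddCommGroup F] [NormedSpace ℝ F] {μ : Measure E} {f : E → F}
    (hf : Integrable f μ) :
    Tendsto (fun R : ℝ => ∫ x, {x | R < ‖x‖}.indicator f x ∂μ) atTop (𝓝 0) := by
  have hmeas (R : ℝ) : MeasurableSet {x : E | R < ‖x‖} :=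
    measurableSet_lt measurable_const measurable_norm
  have hanti : Antitone fun R : ℝ => {x : E | R < ‖x‖} := fun _ _ hRS _ => hRS.trans_lt
  have hempty : ⋂ R : ℝ, {x : E | R < ‖x‖} = ∅ :=
    Set.eq_empty_of_forall_notMem fun x hx => lt_irrefl ‖x‖ (Set.mem_iInter.1 hx ‖x‖)
  have hlim := tendsto_setIntegral_of_antitone hmeas hanti ⟨0, hf.integrableOn⟩
  simpa only [integral_indicator (hmeas _), hempty, setIntegral_empty] using hlim

lemma MemP1.integrable_const_mul_one_add_abs {m : Measure ℝ} (hm : MemP1 m) (C : ℝ) :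
    Integrable (fun x => C * (1 + |x|)) m :=
  have := hm.1
  ((integrable_const 1).add hm.2).const_mul C

lemma MemP1.lineSeg {m μ : Measure ℝ} (hm : MemP1 m) (hμ : MemP1 μ) {t : ℝ}
    (ht : t ∈ Set.Icc (0 : ℝ) 1) : MemP1 (lineSeg μ m t) := by
  have := hm.1
  have := hμ.1
  refine ⟨⟨?_⟩, (hμ.2.smul_measure ENNReal.ofReal_ne_top).add_measure
    (hm.2.smul_measure ENNReal.ofReal_ne_top)⟩
  simp only [_root_.lineSeg, Measure.add_apply, Measure.smul_apply, measure_univ, smul_eq_mul,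
    mul_one]
  rw [← ENNReal.ofReal_add (sub_nonneg.2 ht.2) ht.1, sub_add_cancel, ENNReal.ofReal_one]

lemma lineSeg_one_sub (m μ : Measure ℝ) (t : ℝ) : lineSeg m μ (1 - t) = lineSeg μ m t := by
  simp only [lineSeg, sub_sub_cancel, add_comm]

namespace IsCoupling

variable {m μ : Measure ℝ} {π : Measure (ℝ × ℝ)} {f : ℝ → ℝ}

lemma prod [IsProbabilityMeasure m] [IsProbabilityMeasure μ] : IsCoupling (m.prod μ) m μ :=
  ⟨by simp, by simp⟩

lemma diag (m : Measure ℝ) : IsCoupling (m.map fun x => (x, x)) m m :=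
  ⟨(Measure.map_map measurable_fst (by fun_prop)).trans Measure.map_id,
    (Measure.map_map measurable_snd (by fun_prop)).trans Measure.map_id⟩

lemma sum_smul {ι : Type*} [Fintype ι] {m μ : ι → Measure ℝ} {π : ι → Measure (ℝ × ℝ)}
    (h : ∀ i, IsCoupling (π i) (m i) (μ i)) (c : ι → ENNReal) :
    IsCoupling (∑ i, c i • π i) (∑ i, c i • m i) (∑ i, c i • μ i) := by
  constructor
  · simp only [Measure.map_finset_sum' measurable_fst.aemeasurable, Measure.map_smul, (h _).1]
  · simp only [Measure.map_finset_sum' measurable_snd.aemeasurable, Measure.map_smul, (h _).2]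

lemma integrable_comp_fst (h : IsCoupling π m μ) (hf : Integrable f m) :
    Integrable (fun p => f p.1) π :=
  (h.1.symm ▸ hf).comp_measurable measurable_fst

lemma integrable_comp_snd (h : IsCoupling π m μ) (hf : Integrable f μ) :
    Integrable (fun p => f p.2) π :=
  (h.2.symm ▸ hf).comp_measurable measurable_snd

lemma integral_comp_fst (h : IsCoupling π m μ) (hf : Integrable f m) :
    ∫ p, f p.1 ∂π = ∫ x, f x ∂m := by
  rw [← h.1] at hf ⊢
  exact (integral_map measurable_fst.aemeasurable hf.aestronglyMeasurable).symm

lemma integral_comp_snd (h : IsCoupling π m μ) (hf : Integrable f μ) :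
    ∫ p, f p.2 ∂π = ∫ x, f x ∂μ := by
  rw [← h.2] at hf ⊢
  exact (integral_map measurable_snd.aemeasurable hf.aestronglyMeasurable).symm

lemma integrable_abs_sub (h : IsCoupling π m μ) (hm : MemP1 m) (hμ : MemP1 μ) :
    Integrable (fun p => |p.1 - p.2|) π :=
  ((h.integrable_comp_fst hm.2).add (h.integrable_comp_snd hμ.2)).mono' (by fun_prop)
    (ae_of_all _ fun p => by simpa using abs_sub p.1 p.2)

lemma abs_integral_sub_integral_le (h : IsCoupling π m μ) (hm : MemP1 m) (hμ : MemP1 μ)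
    {g e : ℝ → ℝ} {L : ℝ} (hg : Integrable g m) (hf : Integrable f μ) (he : Integrable e μ)
    (hle : ∀ x y, |g x - f y| ≤ L * |x - y| + e y) :
    |∫ x, g x ∂m - ∫ y, f y ∂μ| ≤ L * ∫ p, |p.1 - p.2| ∂π + ∫ y, e y ∂μ := by
  have hcost := (h.integrable_abs_sub hm hμ).const_mul L
  have hgf := (h.integrable_comp_fst hg).sub (h.integrable_comp_snd hf)
  calc |∫ x, g x ∂m - ∫ y, f y ∂μ| = |∫ p, (g p.1 - f p.2) ∂π| := by
        rw [integral_sub (h.integrable_comp_fst hg) (h.integrable_comp_snd hf),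
          h.integral_comp_fst hg, h.integral_comp_snd hf]
    _ ≤ ∫ p, |g p.1 - f p.2| ∂π := abs_integral_le_integral_abs
    _ ≤ ∫ p, (L * |p.1 - p.2| + e p.2) ∂π :=
        integral_mono hgf.abs (hcost.add (h.integrable_comp_snd he)) fun p => hle p.1 p.2
    _ = L * ∫ p, |p.1 - p.2| ∂π + ∫ y, e y ∂μ := by
        rw [integral_add hcost (h.integrable_comp_snd he), integral_const_mul,
          h.integral_comp_snd he]

end IsCoupling

section W1

variable {m μ m' μ' : Measure ℝ}

lemma zero_mem_lowerBounds_costs (m μ : Measure ℝ) :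
    0 ∈ lowerBounds
      {c : ℝ | ∃ π : Measure (ℝ × ℝ), IsCoupling π m μ ∧ c = ∫ p, |p.1 - p.2| ∂π} := by
  rintro _ ⟨π, -, rfl⟩
  exact integral_nonneg fun _ => abs_nonneg _

lemma W1_nonneg (m μ : Measure ℝ) : 0 ≤ W1 m μ :=
  Real.sInf_nonneg (zero_mem_lowerBounds_costs m μ)

lemma IsCoupling.W1_le {π : Measure (ℝ × ℝ)} (h : IsCoupling π m μ) :
    W1 m μ ≤ ∫ p, |p.1 - p.2| ∂π :=
  csInf_le ⟨0, zero_mem_lowerBounds_costs m μ⟩ ⟨π, h, rfl⟩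

lemma W1_self (m : Measure ℝ) : W1 m m = 0 := by
  refine le_antisymm ((IsCoupling.diag m).W1_le.trans_eq ?_) (W1_nonneg m m)
  rw [integral_map (by fun_prop) (by fun_prop)]
  simp only [sub_self, abs_zero, integral_zero]

lemma exists_seq_isCoupling_tendsto_W1 [IsProbabilityMeasure m] [IsProbabilityMeasure μ] :
    ∃ π : ℕ → Measure (ℝ × ℝ), (∀ n, IsCoupling (π n) m μ) ∧
      Tendsto (fun n => ∫ p, |p.1 - p.2| ∂(π n)) atTop (𝓝 (W1 m μ)) := by
  obtain ⟨c, -, hlim, hc⟩ := exists_seq_tendsto_sInf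
    (S := {c : ℝ | ∃ π : Measure (ℝ × ℝ), IsCoupling π m μ ∧ c = ∫ p, |p.1 - p.2| ∂π})
    ⟨_, m.prod μ, .prod, rfl⟩ ⟨0, zero_mem_lowerBounds_costs m μ⟩
  choose π hπ hcost using hc
  exact ⟨π, hπ, hlim.congr hcost⟩

lemma abs_integral_sub_integral_le_mul_W1_add (hm : MemP1 m) (hμ : MemP1 μ) {g f e : ℝ → ℝ}
    {L : ℝ} (hg : Integrable g m) (hf : Integrable f μ) (he : Integrable e μ)
    (hle : ∀ x y, |g x - f y| ≤ L * |x - y| + e y) :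
    |∫ x, g x ∂m - ∫ y, f y ∂μ| ≤ L * W1 m μ + ∫ y, e y ∂μ := by
  have := hm.1
  have := hμ.1
  obtain ⟨π, hπ, hlim⟩ := exists_seq_isCoupling_tendsto_W1 (m := m) (μ := μ)
  exact ge_of_tendsto' ((hlim.const_mul L).add_const _) fun n =>
    (hπ n).abs_integral_sub_integral_le hm hμ hg hf he hle

lemma W1_sum_smul_le {ι : Type*} [Fintype ι] {m μ : ι → Measure ℝ} (hm : ∀ i, MemP1 (m i))
    (hμ : ∀ i, MemP1 (μ i)) {w : ι → ℝ} (hw : ∀ i, 0 ≤ w i) :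
    W1 (∑ i, ENNReal.ofReal (w i) • m i) (∑ i, ENNReal.ofReal (w i) • μ i) ≤
      ∑ i, w i * W1 (m i) (μ i) := by
  have (i : ι) := (hm i).1
  have (i : ι) := (hμ i).1
  choose π hπ hlim using fun i => exists_seq_isCoupling_tendsto_W1 (m := m i) (μ := μ i)
  refine ge_of_tendsto' (tendsto_finsetSum _ fun i _ => (hlim i).const_mul (w i)) fun n => ?_
  refine (IsCoupling.sum_smul (fun i => hπ i n) fun i => ENNReal.ofReal (w i)).W1_le.trans_eq ?_
  rw [integral_finsetSum_measure fun i _ =>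
    ((hπ i n).integrable_abs_sub (hm i) (hμ i)).smul_measure ENNReal.ofReal_ne_top]
  simp only [integral_smul_measure, ENNReal.toReal_ofReal (hw _), smul_eq_mul]

lemma W1_le_integral_abs_add (hm : MemP1 m) (hμ : MemP1 μ) :
    W1 m μ ≤ ∫ x, |x| ∂m + ∫ x, |x| ∂μ := by
  have := hm.1
  have := hμ.1
  have h : IsCoupling (m.prod μ) m μ := .prod
  have hfst := h.integrable_comp_fst hm.2
  have hsnd := h.integrable_comp_snd hμ.2
  calc W1 m μ ≤ ∫ p, |p.1 - p.2| ∂(m.prod μ) := h.W1_le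
    _ ≤ ∫ p, (|p.1| + |p.2|) ∂(m.prod μ) :=
        integral_mono (h.integrable_abs_sub hm hμ) (hfst.add hsnd) fun p => abs_sub p.1 p.2
    _ = ∫ x, |x| ∂m + ∫ x, |x| ∂μ := by
        rw [integral_add hfst hsnd, h.integral_comp_fst hm.2, h.integral_comp_snd hμ.2]

lemma integral_abs_le_W1_add (hm : MemP1 m) (hμ : MemP1 μ) :
    ∫ x, |x| ∂m ≤ W1 m μ + ∫ x, |x| ∂μ := by
  have hdiff := abs_integral_sub_integral_le_mul_W1_add hm hμ hm.2 hμ.2 (integrable_zero ℝ ℝ μ)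
    (L := 1) fun x y => by simpa using abs_abs_sub_abs_le_abs_sub x y
  simp only [one_mul, Pi.zero_apply, integral_zero, add_zero] at hdiff
  linarith [le_abs_self (∫ x, |x| ∂m - ∫ x, |x| ∂μ)]

lemma W1_lineSeg_lineSeg_le_of_le (hm : MemP1 m) (hμ : MemP1 μ) (hm' : MemP1 m') (hμ' : MemP1 μ')
    {s t : ℝ} (hs : 0 ≤ s) (hst : s ≤ t) (ht : t ≤ 1) :
    W1 (lineSeg μ' m' t) (lineSeg μ m s) ≤
      (1 - t) * W1 μ' μ + s * W1 m' m + (t - s) * W1 m' μ := by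
  have hconv := W1_sum_smul_le (m := ![μ', m', m']) (μ := ![μ, m, μ]) (w := ![1 - t, s, t - s])
    (by simp [Fin.forall_fin_succ, hm', hμ']) (by simp [Fin.forall_fin_succ, hm, hμ])
    (by simp [Fin.forall_fin_succ, hs, hst, ht])
  simp only [Fin.sum_univ_three, Matrix.cons_val] at hconv
  convert hconv using 2
  · rw [lineSeg, add_assoc, ← add_smul, ← ENNReal.ofReal_add hs (sub_nonneg.2 hst),
      add_sub_cancel]
  · rw [lineSeg, add_right_comm, ← add_smul,
      ← ENNReal.ofReal_add (sub_nonneg.2 ht) (sub_nonneg.2 hst), sub_add_sub_cancel]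

lemma W1_lineSeg_lineSeg_le (hm : MemP1 m) (hμ : MemP1 μ) (hm' : MemP1 m') (hμ' : MemP1 μ')
    {s t : ℝ} (hs : s ∈ Set.Icc (0 : ℝ) 1) (ht : t ∈ Set.Icc (0 : ℝ) 1) :
    W1 (lineSeg μ' m' t) (lineSeg μ m s) ≤
      W1 m' m + W1 μ' μ + |t - s| * (W1 m' μ + W1 μ' m) := by
  wlog hst : s ≤ t generalizing m μ m' μ' s t
  · have hswap := this hμ hm hμ' hm' (Set.Icc.mem_iff_one_sub_mem.1 hs)
      (Set.Icc.mem_iff_one_sub_mem.1 ht) (sub_le_sub_left (le_of_not_ge hst) 1)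
    rw [lineSeg_one_sub, lineSeg_one_sub, sub_sub_sub_cancel_left, abs_sub_comm] at hswap
    linarith
  calc W1 (lineSeg μ' m' t) (lineSeg μ m s)
      ≤ (1 - t) * W1 μ' μ + s * W1 m' m + (t - s) * W1 m' μ :=
        W1_lineSeg_lineSeg_le_of_le hm hμ hm' hμ' hs.1 hst ht.2
    _ ≤ 1 * W1 μ' μ + 1 * W1 m' m + |t - s| * (W1 m' μ + W1 μ' m) := by
        gcongr
        · exact W1_nonneg _ _
        · linarith [ht.1]
        · exact W1_nonneg _ _
        · exact hs.2
        · exact W1_nonneg _ _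
        · exact le_abs_self _
        · exact le_add_of_nonneg_right (W1_nonneg _ _)
    _ = W1 m' m + W1 μ' μ + |t - s| * (W1 m' μ + W1 μ' m) := by ring

end W1

section NhdsW1

variable {α : Type*} {l : Filter α} {m μ : Measure ℝ}

/-- The trace on `P₁(ℝ)` of the neighbourhood filter of `m` for `W1`. Continuity with respect to
`W1` is expressed as convergence along this filter, rather than through a metric space of
measures. -/
noncomputable def nhdsW1 (m : Measure ℝ) : Filter (Measure ℝ) :=
  comap (fun μ => W1 μ m) (𝓝 0) ⊓ 𝓟 {μ | MemP1 μ}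

instance (m : Measure ℝ) : (nhdsW1 m).IsCountablyGenerated := by
  unfold nhdsW1
  infer_instance

lemma tendsto_nhdsW1_iff {f : α → Measure ℝ} :
    Tendsto f l (nhdsW1 m) ↔ Tendsto (fun a => W1 (f a) m) l (𝓝 0) ∧ ∀ᶠ a in l, MemP1 (f a) := by
  simp only [nhdsW1, tendsto_inf, tendsto_comap_iff, tendsto_principal, Function.comp_def,
    Set.mem_ofPred_eq]

lemma tendsto_W1_nhdsW1 (m : Measure ℝ) : Tendsto (fun μ => W1 μ m) (nhdsW1 m) (𝓝 0) :=
  (tendsto_nhdsW1_iff.1 tendsto_id).1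

lemma eventually_memP1_nhdsW1 (m : Measure ℝ) : ∀ᶠ μ in nhdsW1 m, MemP1 μ :=
  (tendsto_nhdsW1_iff.1 tendsto_id).2

lemma tendsto_const_nhdsW1 (hm : MemP1 m) : Tendsto (fun _ : α => m) l (nhdsW1 m) :=
  tendsto_nhdsW1_iff.2 ⟨by simpa only [W1_self] using tendsto_const_nhds, .of_forall fun _ => hm⟩

lemma eventually_nhdsW1_self {p : Measure ℝ → Prop} (hm : MemP1 m) (h : ∀ᶠ μ in nhdsW1 m, p μ) :
    p m :=
  eventually_pure.1 ((tendsto_const_nhdsW1 (l := pure ()) hm).eventually h)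

lemma nhdsW1_basis (m : Measure ℝ) :
    (nhdsW1 m).HasBasis (0 < ·) fun η => {μ | MemP1 μ ∧ W1 μ m < η} := by
  refine ((Metric.nhds_basis_ball.comap _).inf_principal _).congr (fun _ => Iff.rfl) fun η _ => ?_
  ext μ
  simp [abs_of_nonneg (W1_nonneg μ m), and_comm]

lemma nhdsW1_prod_basis (m μ : Measure ℝ) :
    (nhdsW1 m ×ˢ nhdsW1 μ).HasBasis (0 < ·)
      fun η => {ν | MemP1 ν ∧ W1 ν m < η} ×ˢ {ν | MemP1 ν ∧ W1 ν μ < η} :=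
  (nhdsW1_basis m).prod_same_index_mono (nhdsW1_basis μ)
    (fun _ _ _ _ hle _ hν => ⟨hν.1, hν.2.trans_le hle⟩)
    (fun _ _ _ _ hle _ hν => ⟨hν.1, hν.2.trans_le hle⟩)

lemma w1ContinuousAt_iff_tendsto {g : Measure ℝ → ℝ} :
    W1ContinuousAt g m ↔ Tendsto g (nhdsW1 m) (𝓝 (g m)) := by
  simp only [W1ContinuousAt, (nhdsW1_basis m).tendsto_iff Metric.nhds_basis_ball, Metric.mem_ball,
    Real.dist_eq, Set.mem_ofPred_eq, and_imp]

lemma jointlyContinuous_iff_tendsto {G : Measure ℝ → ℝ → ℝ} :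
    JointlyContinuous G ↔ ∀ m x, MemP1 m →
      Tendsto (fun p : Measure ℝ × ℝ => G p.1 p.2) (nhdsW1 m ×ˢ 𝓝 x) (𝓝 (G m x)) := by
  have hbasis (m : Measure ℝ) (x : ℝ) := (nhdsW1_basis m).prod_same_index_mono
    (Metric.nhds_basis_ball (x := x)) (fun _ _ _ _ hle _ hν => ⟨hν.1, hν.2.trans_le hle⟩)
    (fun _ _ _ _ hle => Metric.ball_subset_ball hle)
  simp only [JointlyContinuous, (hbasis _ _).tendsto_iff Metric.nhds_basis_ball, Metric.mem_ball,
    Real.dist_eq, Set.mem_ofPred_eq, Set.mem_prod, Prod.forall, and_imp]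

lemma tendsto_lineSeg_nhdsW1 (hm : MemP1 m) (hμ : MemP1 μ) {t : ℝ} (ht : t ∈ Set.Icc (0 : ℝ) 1) :
    Tendsto (fun p : (Measure ℝ × Measure ℝ) × ℝ => lineSeg p.1.2 p.1.1 p.2)
      ((nhdsW1 m ×ˢ nhdsW1 μ) ×ˢ 𝓝[Set.Icc 0 1] t) (nhdsW1 (lineSeg μ m t)) := by
  set l := (nhdsW1 m ×ˢ nhdsW1 μ) ×ˢ 𝓝[Set.Icc 0 1] t
  have hfst : Tendsto (fun p : (Measure ℝ × Measure ℝ) × ℝ => p.1.1) l (nhdsW1 m) :=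
    tendsto_fst.comp tendsto_fst
  have hsnd : Tendsto (fun p : (Measure ℝ × Measure ℝ) × ℝ => p.1.2) l (nhdsW1 μ) :=
    tendsto_snd.comp tendsto_fst
  have htime : Tendsto (fun p : (Measure ℝ × Measure ℝ) × ℝ => |p.2 - t|) l (𝓝 0) := by
    have hid : Tendsto (fun s => s) (𝓝[Set.Icc 0 1] t) (𝓝 t) := nhdsWithin_le_nhds
    have habs := (hid.sub_const t).abs
    rw [sub_self, abs_zero] at habs
    exact habs.comp tendsto_snd
  have hmem : ∀ᶠ p in l, MemP1 p.1.1 ∧ MemP1 p.1.2 ∧ p.2 ∈ Set.Icc (0 : ℝ) 1 :=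
    (hfst.eventually (eventually_memP1_nhdsW1 m)).and
      ((hsnd.eventually (eventually_memP1_nhdsW1 μ)).and
        (tendsto_snd.eventually self_mem_nhdsWithin))
  obtain ⟨hlim_fst, -⟩ := tendsto_nhdsW1_iff.1 hfst
  obtain ⟨hlim_snd, -⟩ := tendsto_nhdsW1_iff.1 hsnd
  have hbound := (hlim_fst.add hlim_snd).add
    (htime.mul ((hlim_fst.add hlim_snd).add_const (2 * (∫ x, |x| ∂m + ∫ x, |x| ∂μ))))
  simp only [add_zero, zero_add, zero_mul] at hbound
  refine tendsto_nhdsW1_iff.2 ⟨squeeze_zero' (.of_forall fun _ => W1_nonneg _ _) ?_ hbound,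
    hmem.mono fun p hp => hp.1.lineSeg hp.2.1 hp.2.2⟩
  filter_upwards [hmem] with p ⟨hm', hμ', hs⟩
  refine (W1_lineSeg_lineSeg_le hm hμ hm' hμ' ht hs).trans ?_
  gcongr _ + _ * ?_
  linarith [W1_le_integral_abs_add hm' hμ, W1_le_integral_abs_add hμ' hm,
    integral_abs_le_W1_add hm' hm, integral_abs_le_W1_add hμ' hμ]

lemma tendsto_integral_nhdsW1 {u : α → ℝ → ℝ} {f : ℝ → ℝ} {C : ℝ} (hμ : MemP1 μ)
    (hu : ∀ᶠ a in l, Continuous (u a)) (hf : Continuous f)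
    (hu_le : ∀ᶠ a in l, ∀ x, |u a x| ≤ C * (1 + |x|)) (hf_le : ∀ x, |f x| ≤ C * (1 + |x|))
    (hlim : ∀ x, Tendsto (fun p : α × ℝ => u p.1 p.2) (l ×ˢ 𝓝 x) (𝓝 (f x))) :
    Tendsto (fun p : α × Measure ℝ => ∫ x, u p.1 x ∂p.2) (l ×ˢ nhdsW1 μ) (𝓝 (∫ x, f x ∂μ)) := by
  have := hμ.1
  rw [Metric.tendsto_nhds]
  intro ε hε
  have hgrowth := hμ.integrable_const_mul_one_add_abs (2 * C)
  obtain ⟨R, hR⟩ := ((tendsto_integral_indicator_lt_norm hgrowth).eventually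
    (gt_mem_nhds (show 0 < ε / 3 by positivity))).exists
  obtain ⟨L, hdom⟩ := exists_eventually_norm_sub_le_add_indicator hf hlim hu_le hf_le R
    (show 0 < ε / 3 by positivity)
  have htail : Integrable ({y : ℝ | R < ‖y‖}.indicator fun y => 2 * C * (1 + |y|)) μ :=
    hgrowth.indicator (measurableSet_lt measurable_const measurable_norm)
  have hcost : ∀ᶠ ρ in nhdsW1 μ, L * W1 ρ μ < ε / 3 := by
    refine ((tendsto_W1_nhdsW1 μ).const_mul L).eventually (gt_mem_nhds ?_)
    rw [mul_zero]
    positivity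
  filter_upwards [(hu.and (hu_le.and hdom)).prod_mk ((eventually_memP1_nhdsW1 μ).and hcost)]
    with ⟨a, ρ⟩ ⟨⟨hu, hu_le, hdom⟩, hρ, hcost⟩
  have hdiff := abs_integral_sub_integral_le_mul_W1_add hρ hμ
    ((hρ.integrable_const_mul_one_add_abs C).mono' hu.aestronglyMeasurable (ae_of_all _ hu_le))
    ((hμ.integrable_const_mul_one_add_abs C).mono' hf.aestronglyMeasurable (ae_of_all _ hf_le))
    ((integrable_const (ε / 3)).add htail) hdom
  simp only [Pi.add_apply] at hdiff
  rw [integral_add (integrable_const _) htail, integral_const, probReal_univ, one_smul] at hdiff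
  rw [Real.dist_eq]
  linarith

lemma w1Compact_insert_range (hm : MemP1 m) {v : ℕ → Measure ℝ} (hv : ∀ n, MemP1 (v n))
    (hlim : Tendsto (fun n => W1 (v n) m) atTop (𝓝 0)) : W1Compact (insert m (Set.range v)) := by
  refine ⟨Set.forall_mem_insert.2 ⟨hm, Set.forall_mem_range.2 hv⟩, fun u hu => ?_⟩
  -- A sequence with no value taken infinitely often leaves every finite set, so tends to `m`.
  by_cases hfreq : ∃ x ∈ insert m (Set.range v), ∃ᶠ j in atTop, u j = x
  · obtain ⟨x, hx, hfreq⟩ := hfreq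
    obtain ⟨φ, hφ, huφ⟩ := extraction_of_frequently_atTop hfreq
    exact ⟨x, hx, φ, hφ, by simp only [huφ, W1_self, tendsto_const_nhds]⟩
  · simp only [not_exists, not_and, not_frequently] at hfreq
    refine ⟨m, Set.mem_insert _ _, id, strictMono_id, tendsto_order.2
      ⟨fun a ha => .of_forall fun _ => ha.trans_le (W1_nonneg _ _), fun ε hε => ?_⟩⟩
    have hfin : {n | ¬ W1 (v n) m < ε}.Finite := by
      rw [← Nat.cofinite_eq_atTop] at hlim
      exact hlim.eventually (gt_mem_nhds hε)
    have havoid : ∀ᶠ j in atTop, ∀ n ∈ {n | ¬ W1 (v n) m < ε}, u j ≠ v n :=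
      hfin.eventually_all.2 fun n _ => hfreq _ (Set.mem_insert_of_mem _ ⟨n, rfl⟩)
    filter_upwards [havoid] with j hj
    rcases hu j with h | ⟨n, hn⟩
    · simpa only [id, h, W1_self] using hε
    · by_contra hfar
      exact hj n (by simpa only [id, ← hn] using hfar) hn.symm

lemma SublinearOnCompacts.exists_eventually_abs_le {G : Measure ℝ → ℝ → ℝ}
    (hG : SublinearOnCompacts G) (hm : MemP1 m) :
    ∃ C, ∀ᶠ μ in nhdsW1 m, ∀ x, |G μ x| ≤ C * (1 + |x|) := by
  by_contra! h
  have hex (n : ℕ) : ∃ μ, (MemP1 μ ∧ W1 μ m < 1 / (n + 1 : ℝ)) ∧ ∃ x, n * (1 + |x|) < |G μ x| :=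
    (((h n).and_eventually ((nhdsW1_basis m).mem_of_mem Nat.one_div_pos_of_nat)).exists).imp
      fun _ hμ => ⟨hμ.2, hμ.1⟩
  choose v hv x hx using hex
  have hlim : Tendsto (fun n => W1 (v n) m) atTop (𝓝 0) :=
    squeeze_zero (fun _ => W1_nonneg _ _) (fun n => (hv n).2.le)
      tendsto_one_div_add_atTop_nhds_zero_nat
  obtain ⟨C, -, hC⟩ := hG _ (w1Compact_insert_range hm (fun n => (hv n).1) hlim)
  obtain ⟨n, hn⟩ := exists_nat_ge C
  have hle : |G (v n) (x n)| ≤ n * (1 + |x n|) :=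
    (hC _ (Set.mem_insert_of_mem _ ⟨n, rfl⟩) (x n)).trans (by gcongr)
  exact hle.not_gt (hx n)

lemma JointlyContinuous.continuous {G : Measure ℝ → ℝ → ℝ} (hG : JointlyContinuous G)
    (hm : MemP1 m) : Continuous (G m) :=
  continuous_iff_continuousAt.2 fun x =>
    (jointlyContinuous_iff_tendsto.1 hG m x hm).comp ((tendsto_const_nhdsW1 hm).prodMk tendsto_id)

lemma IsC01.jointlyContinuous {G : Measure ℝ → ℝ → ℝ} (hG : IsC01 G) : JointlyContinuous G := by
  obtain ⟨hdiff, hcont, -, hderiv⟩ := hG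
  refine jointlyContinuous_iff_tendsto.2 fun m x hm => ?_
  obtain ⟨η, hη, hclose⟩ := hderiv m x hm 1 one_pos
  set L := |deriv (G m) x| + 1
  have hlip : ∀ᶠ p in nhdsW1 m ×ˢ 𝓝 x, ‖G p.1 p.2 - G p.1 x‖ ≤ L * ‖p.2 - x‖ := by
    filter_upwards [prod_mem_prod ((nhdsW1_basis m).mem_of_mem hη) (Metric.ball_mem_nhds x hη)]
      with ⟨μ, y⟩ ⟨⟨hμ, hμm⟩, hy⟩
    refine (convex_ball x η).norm_image_sub_le_of_norm_deriv_le
      (fun z _ => (hdiff μ hμ).differentiable one_ne_zero z) (fun z hz => ?_)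
      (Metric.mem_ball_self hη) hy
    have hz' := hclose μ z hμ hμm hz
    rw [Real.norm_eq_abs]
    linarith [abs_sub_abs_le_abs_sub (deriv (G μ) z) (deriv (G m) x)]
  have hincr : Tendsto (fun p : Measure ℝ × ℝ => G p.1 p.2 - G p.1 x)
      (nhdsW1 m ×ˢ 𝓝 x) (𝓝 0) := by
    have hsub : Tendsto (fun y => L * ‖y - x‖) (𝓝 x) (𝓝 (L * ‖x - x‖)) :=
      Continuous.tendsto (by fun_prop) x
    rw [sub_self, norm_zero, mul_zero] at hsub
    exact squeeze_zero_norm' hlip (hsub.comp tendsto_snd)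
  simpa using hincr.add ((w1ContinuousAt_iff_tendsto.1 (hcont x m hm)).comp tendsto_fst)

end NhdsW1

section Segment

variable {G : Measure ℝ → ℝ → ℝ} {m μ : Measure ℝ}

lemma JointlyContinuous.tendsto_integral (hG : JointlyContinuous G) (hG' : SublinearOnCompacts G)
    (hm : MemP1 m) (hμ : MemP1 μ) :
    Tendsto (fun p : Measure ℝ × Measure ℝ => ∫ x, G p.1 x ∂p.2) (nhdsW1 m ×ˢ nhdsW1 μ)
      (𝓝 (∫ x, G m x ∂μ)) := by
  obtain ⟨C, hC⟩ := hG'.exists_eventually_abs_le hm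
  exact tendsto_integral_nhdsW1 hμ ((eventually_memP1_nhdsW1 m).mono fun _ => hG.continuous)
    (hG.continuous hm) hC (eventually_nhdsW1_self hm hC)
    fun x => jointlyContinuous_iff_tendsto.1 hG m x hm

lemma JointlyContinuous.tendsto_dInt_lineSeg (hG : JointlyContinuous G)
    (hG' : SublinearOnCompacts G) (hm : MemP1 m) (hμ : MemP1 μ) {t : ℝ}
    (ht : t ∈ Set.Icc (0 : ℝ) 1) :
    Tendsto (fun p : (Measure ℝ × Measure ℝ) × ℝ =>
        dInt (G (lineSeg p.1.2 p.1.1 p.2)) p.1.1 p.1.2)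
      ((nhdsW1 m ×ˢ nhdsW1 μ) ×ˢ 𝓝[Set.Icc 0 1] t) (𝓝 (dInt (G (lineSeg μ m t)) m μ)) := by
  have hseg := tendsto_lineSeg_nhdsW1 hm hμ ht
  have hmem := hm.lineSeg hμ ht
  exact ((hG.tendsto_integral hG' hmem hm).comp (hseg.prodMk (tendsto_fst.comp tendsto_fst))).sub
    ((hG.tendsto_integral hG' hmem hμ).comp (hseg.prodMk (tendsto_snd.comp tendsto_fst)))

lemma JointlyContinuous.continuousOn_dInt_lineSeg (hG : JointlyContinuous G)
    (hG' : SublinearOnCompacts G) (hm : MemP1 m) (hμ : MemP1 μ) :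
    ContinuousOn (fun t => dInt (G (lineSeg μ m t)) m μ) (Set.Icc 0 1) := fun _ ht =>
  (hG.tendsto_dInt_lineSeg hG' hm hμ ht).comp
    (((tendsto_const_nhdsW1 hm).prodMk (tendsto_const_nhdsW1 hμ)).prodMk tendsto_id)

lemma JointlyContinuous.tendsto_integral_dInt_lineSeg (hG : JointlyContinuous G)
    (hG' : SublinearOnCompacts G) (hm : MemP1 m) (hμ : MemP1 μ) :
    Tendsto (fun p : Measure ℝ × Measure ℝ =>
        ∫ t in (0 : ℝ)..1, dInt (G (lineSeg p.2 p.1 t)) p.1 p.2)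
      (nhdsW1 m ×ˢ nhdsW1 μ) (𝓝 (∫ t in (0 : ℝ)..1, dInt (G (lineSeg μ m t)) m μ)) := by
  have hIcc : Set.uIcc (0 : ℝ) 1 = Set.Icc 0 1 := Set.uIcc_of_le zero_le_one
  apply TendstoUniformlyOn.tendsto_intervalIntegral_of_continuousOn
  · rw [hIcc]
    filter_upwards [(eventually_memP1_nhdsW1 m).prod_mk (eventually_memP1_nhdsW1 μ)] with p hp
    exact hG.continuousOn_dInt_lineSeg hG' hp.1 hp.2
  · rw [hIcc]
    exact tendstoUniformlyOn_of_forall_tendsto_prod isCompact_Icc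
      (hG.continuousOn_dInt_lineSeg hG' hm hμ) fun _ => hG.tendsto_dInt_lineSeg hG' hm hμ

end Segment

theorem stmt8_general (G : Measure ℝ → ℝ → ℝ) (hG : JointlyContinuous G)
    (hG' : SublinearOnCompacts G) :
    ∀ m μ, MemP1 m → MemP1 μ → ∀ ε > 0, ∃ η > 0,
      ∀ m' μ', MemP1 m' → MemP1 μ' → W1 m' m < η → W1 μ' μ < η →
        |(∫ t in (0:ℝ)..1, dInt (G (lineSeg μ' m' t)) m' μ') -
          ∫ t in (0:ℝ)..1, dInt (G (lineSeg μ m t)) m μ| < ε := by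
  intro m μ hm hμ ε hε
  obtain ⟨η, hη, hclose⟩ := ((nhdsW1_prod_basis m μ).tendsto_iff Metric.nhds_basis_ball).1
    (hG.tendsto_integral_dInt_lineSeg hG' hm hμ) ε hε
  exact ⟨η, hη, fun m' μ' hm' hμ' hmη hμη => hclose (m', μ') ⟨⟨hm', hmη⟩, hμ', hμη⟩⟩

/-- Lemma on joint continuity of `Φ`: for `G` of class `C^{0,1}`, the
function `Φ(m,μ) = ∫₀¹ ∫ G((1-t)μ + t·m, x) d(m-μ)(x) dt` is jointly `W₁`-continuous. -/
theorem stmt8 (G : Measure ℝ → ℝ → ℝ) (hG : IsC01 G) :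
    ∀ m μ, MemP1 m → MemP1 μ → ∀ ε > 0, ∃ η > 0,
      ∀ m' μ', MemP1 m' → MemP1 μ' → W1 m' m < η → W1 μ' μ < η →
        |(∫ t in (0:ℝ)..1, dInt (G (lineSeg μ' m' t)) m' μ') -
          ∫ t in (0:ℝ)..1, dInt (G (lineSeg μ m t)) m μ| < ε :=
  stmt8_general G hG.jointlyContinuous hG.2.2.1
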